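/- Let (X, ℬ, μ, T) be a conservative, measure-preserving transformation of a σ-finite measure space. Let (a_n)_{n≥1} be a sequence of measurable functions that is superadditive with respect to T, with a_1 ≥ 0 μ-a.e. Let g ∈ L¹(X, μ) with g > 0 μ-a.e. Then for every measurable T-invariant set A: sup_{n≥1} (1/n)∫_A a_n dμ ≤ ∫_A (liminf_{n→∞} a_n / S_n g)·g dμ. -/

import Mathlib

/-!
Restricting `μ` to the invariant set `A` keeps `T` measure preserving and conservative, so it is
enough to show `∫ a_N ≤ N ∫ L g` over the whole space for each `N ≥ 1`, where
`L = liminf a_n / S_n g`.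

* `L` is invariant. By recurrence `S_n g → ∞`, so `a_{n+1} ≥ a_n ∘ T` gives `L ∘ T ≤ L`, and on a
  conservative system a function that does not increase along orbits is invariant
  (`ae_comp_eq_of_ae_comp_le`).
* Superadditivity, averaged over the `N` ways of cutting an orbit segment into blocks of length
  `N`, gives `S_m a_N ≤ N a_n` for a multiple `m` of `N` with `m ≥ n - 2 N` (`sum_range_le_mul`).
  For the truncation `f = min (a_N, K, K g)` the missing terms cost at most `2 N K`, which is
  negligible against `S_n g`.
* If `∫ L g < ∞`, let `h = N (L + ε) g - f`. As `L` is invariant,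
  `S_n h = N (L + ε) S_n g - S_n f`, and this is positive for some `n`, because
  `a_n < (L + ε / 2) S_n g` for infinitely many `n`. Hopf's maximal ergodic theorem
  (`integral_nonneg_of_birkhoff_pos`) then yields `∫ f ≤ N ∫ (L + ε) g`. Let `ε → 0`, and then
  `K → ∞` by monotone convergence.

The truncation by `K g` makes `f` integrable; the one by the constant `K` controls the end of the
orbit segment without an almost everywhere estimate of `g ∘ T^n / S_n g`.
-/

open MeasureTheory Filter Topology

/-- `T` is conservative w.r.t. `μ`: every set of positive measure returns to itself. -/
def IsConservative {X : Type*} [MeasurableSpace X] (T : X → X) (μ : Measure X) : Prop :=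
  ∀ A : Set X, MeasurableSet A → 0 < μ A → ∃ n ≥ 1, 0 < μ (A ∩ (T^[n]) ⁻¹' A)

/-- Birkhoff sum `S_n f = ∑_{k<n} f ∘ T^k`. -/
noncomputable def birkhoff {X : Type*} (T : X → X) (f : X → ℝ) (n : ℕ) (x : X) : ℝ :=
  ∑ k ∈ Finset.range n, f (T^[k] x)


/-- The nonnegative part of an extended real, as an extended nonnegative real. -/
noncomputable def erealToENNReal (x : EReal) : ENNReal :=
  if x = ⊤ then ⊤ else ENNReal.ofReal x.toReal

section Aux

variable {X : Type*} {T : X → X}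

/-! ### Birkhoff sums and iterates -/

lemma birkhoff_succ' (f : X → ℝ) (n : ℕ) (x : X) :
    birkhoff T f (n + 1) x = f x + birkhoff T f n (T x) := by
  simp only [birkhoff, Finset.sum_range_succ', Function.iterate_succ_apply,
    Function.iterate_zero, id]
  exact add_comm _ _

lemma measurable_birkhoff [MeasurableSpace X] (hT : Measurable T)
    {f : X → ℝ} (hf : Measurable f) (n : ℕ) :
    Measurable (birkhoff T f n) := by
  unfold birkhoff
  exact Finset.measurable_sum _ fun k _ => hf.comp (hT.iterate k)

lemma ae_forall_iterate
    [MeasurableSpace X] {μ : Measure X}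
    (hT : MeasurePreserving T μ μ) {p : X → Prop} (hp : ∀ᵐ x ∂μ, p x) :
    ∀ᵐ x ∂μ, ∀ k, p (T^[k] x) :=
  ae_all_iff.2 fun k => (hT.iterate k).quasiMeasurePreserving.ae hp

lemma IsConservative.conservative
    [MeasurableSpace X] {μ : Measure X}
    (hc : IsConservative T μ) (hT : MeasurePreserving T μ μ) :
    Conservative T μ := by
  refine ⟨hT.quasiMeasurePreserving, fun s hs h0 => ?_⟩
  obtain ⟨n, hn, h⟩ := hc s hs (pos_iff_ne_zero.2 h0)
  obtain ⟨x, hx1, hx2⟩ := nonempty_of_measure_ne_zero h.ne'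
  exact ⟨x, hx1, n, by omega, hx2⟩

/-! ### The maximal ergodic theorem -/

/-- `maxSum T h n` is the maximum of `S_k h` over `0 ≤ k ≤ n` (with `S_0 h = 0`), defined by the
recursion `M_{n+1} = max 0 (h + M_n ∘ T)`. -/
noncomputable def maxSum (T : X → X) (h : X → ℝ) : ℕ → X → ℝ
  | 0 => fun _ => 0
  | n + 1 => fun x => max 0 (h x + maxSum T h n (T x))

lemma maxSum_le_succ (h : X → ℝ) (n : ℕ) (x : X) : maxSum T h n x ≤ maxSum T h (n + 1) x := by
  induction n generalizing x with
  | zero => exact le_max_left _ _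
  | succ n ih => exact max_le_max le_rfl (by simpa using ih (T x))

lemma birkhoff_le_maxSum (h : X → ℝ) (n : ℕ) (x : X) : birkhoff T h n x ≤ maxSum T h n x := by
  induction n generalizing x with
  | zero => simp [birkhoff, maxSum]
  | succ n ih =>
    rw [birkhoff_succ']
    exact le_max_of_le_right (by simpa using ih (T x))

lemma measurable_maxSum [MeasurableSpace X] (hT : Measurable T)
    {h : X → ℝ} (hh : Measurable h) (n : ℕ) :
    Measurable (maxSum T h n) := by
  induction n with
  | zero => exact measurable_const
  | succ n ih => exact measurable_const.max (hh.add (ih.comp hT))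

lemma integrable_maxSum
    [MeasurableSpace X] {μ : Measure X}
    (hT : MeasurePreserving T μ μ) {h : X → ℝ} (hh : Integrable h μ) (n : ℕ) :
    Integrable (maxSum T h n) μ := by
  induction n with
  | zero => exact integrable_zero _ _ _
  | succ n ih =>
    exact (integrable_zero X ℝ μ).sup (hh.add (hT.integrable_comp_of_integrable ih))

/-- Hopf's maximal ergodic theorem, in the case where almost every orbit has a positive
Birkhoff sum; the proof is Garsia's. -/
lemma integral_nonneg_of_birkhoff_pos
    [MeasurableSpace X] {μ : Measure X}
    (hT : MeasurePreserving T μ μ) {h : X → ℝ}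
    (hm : Measurable h) (hh : Integrable h μ) (hpos : ∀ᵐ x ∂μ, ∃ n, 0 < birkhoff T h n x) :
    0 ≤ ∫ x, h x ∂μ := by
  set E : ℕ → Set X := fun n => {x | 0 < maxSum T h n x} with hE
  have hEm : ∀ n, MeasurableSet (E n) := fun n =>
    measurableSet_lt measurable_const (measurable_maxSum hT.measurable hm n)
  have hmono : ∀ x, Monotone fun n => maxSum T h n x := fun x =>
    monotone_nat_of_le_succ fun n => maxSum_le_succ h n x
  have hnn : ∀ n x, 0 ≤ maxSum T h n x := fun n x => by
    simpa [maxSum] using hmono x (Nat.zero_le n)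
  have key : ∀ n, 0 ≤ ∫ x, (E (n + 1)).indicator h x ∂μ := by
    intro n
    have i1 := integrable_maxSum hT hh (n + 1)
    have i0 := integrable_maxSum hT hh n
    have ic : Integrable (fun x => maxSum T h n (T x)) μ := hT.integrable_comp_of_integrable i0
    have hcomp : ∫ x, maxSum T h n (T x) ∂μ = ∫ x, maxSum T h n x ∂μ := by
      rw [← integral_map (f := maxSum T h n) hT.measurable.aemeasurable
        (measurable_maxSum hT.measurable hm n).aestronglyMeasurable, hT.map_eq]
    calc (0 : ℝ) ≤ ∫ x, maxSum T h (n + 1) x ∂μ - ∫ x, maxSum T h n (T x) ∂μ := by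
          rw [hcomp, sub_nonneg]
          exact integral_mono i0 i1 fun x => maxSum_le_succ h n x
      _ = ∫ x, (maxSum T h (n + 1) x - maxSum T h n (T x)) ∂μ := (integral_sub i1 ic).symm
      _ ≤ ∫ x, (E (n + 1)).indicator h x ∂μ := by
          refine integral_mono (i1.sub ic) (hh.indicator (hEm _)) fun x => ?_
          by_cases hx : x ∈ E (n + 1)
          · have hx' : 0 < max 0 (h x + maxSum T h n (T x)) := hx
            have h2 : maxSum T h (n + 1) x = h x + maxSum T h n (T x) := by
              change max 0 (h x + maxSum T h n (T x)) = _
              rcases lt_max_iff.1 hx' with h3 | h3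
              · exact absurd h3 (lt_irrefl _)
              · exact max_eq_right h3.le
            simp [Set.indicator_of_mem hx, h2]
          · have h2 : maxSum T h (n + 1) x ≤ 0 := not_lt.1 hx
            have h3 := hnn n (T x)
            simp only [Set.indicator_of_notMem hx]
            linarith
  have hlim : Tendsto (fun n => ∫ x, (E (n + 1)).indicator h x ∂μ) atTop (𝓝 (∫ x, h x ∂μ)) := by
    refine tendsto_integral_of_dominated_convergence (fun x => ‖h x‖)
      (fun n => (hm.indicator (hEm _)).aestronglyMeasurable) hh.norm
      (fun n => Eventually.of_forall fun x => norm_indicator_le_norm_self _ _) ?_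
    filter_upwards [hpos] with x hx
    obtain ⟨m, hm⟩ := hx
    refine tendsto_const_nhds.congr' ?_
    filter_upwards [eventually_ge_atTop m] with n hn
    rw [Set.indicator_of_mem]
    exact hm.trans_le ((birkhoff_le_maxSum h m x).trans (hmono x (by omega)))
  exact ge_of_tendsto' hlim key

/-! ### Consequences of conservativity -/

/-- Over a conservative system, a function that does not increase along orbits is invariant:
a point that drops strictly below a rational level can never return above it. -/
lemma ae_comp_eq_of_ae_comp_le
    [MeasurableSpace X] {μ : Measure X}
    (hT : MeasurePreserving T μ μ) (hc : Conservative T μ)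
    {φ : X → ENNReal} (hφ : Measurable φ) (hle : ∀ᵐ x ∂μ, φ (T x) ≤ φ x) :
    ∀ᵐ x ∂μ, φ (T x) = φ x := by
  have horb := ae_forall_iterate hT hle
  have hnull : ∀ q : ℚ, ∀ᵐ x ∂μ,
      ¬ (φ (T x) < (Real.toNNReal q : ENNReal) ∧ (Real.toNNReal q : ENNReal) < φ x) := by
    intro q
    set c : ENNReal := (Real.toNNReal q : ENNReal)
    have hD : MeasurableSet {x | φ (T x) < c ∧ c < φ x} :=
      (measurableSet_lt (hφ.comp hT.measurable) measurable_const).inter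
        (measurableSet_lt measurable_const hφ)
    set D := {x | φ (T x) < c ∧ c < φ x} with hDdef
    set G := {x | ∀ k, φ (T (T^[k] x)) ≤ φ (T^[k] x)} with hG
    have hDG : (D ∩ G : Set X) =ᵐ[μ] D := by
      filter_upwards [horb] with x hx
      exact propext ⟨fun h => h.1, fun h => ⟨h, hx⟩⟩
    have hzero : μ (D ∩ G) = 0 := by
      by_contra h0
      obtain ⟨x, ⟨hxD, hxG⟩, m, hm, hmx, -⟩ := hc.exists_mem_iterate_mem
        (hD.nullMeasurableSet.congr hDG.symm) h0
      have hanti : Antitone fun k => φ (T^[k] x) := antitone_nat_of_succ_le fun k => by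
        rw [Function.iterate_succ_apply']; exact hxG k
      have h1 : φ (T^[m] x) ≤ φ (T x) := hanti (show 1 ≤ m by omega)
      exact absurd (hmx.2.trans_le h1) (not_lt.2 hxD.1.le)
    rw [measure_congr hDG] at hzero
    rw [ae_iff]
    simpa [hDdef] using hzero
  filter_upwards [hle, ae_all_iff.2 hnull] with x hx hq
  refine le_antisymm hx (not_lt.1 fun hlt => ?_)
  obtain ⟨q, -, h1, h2⟩ := ENNReal.lt_iff_exists_rat_btwn.1 hlt
  exact hq q ⟨h1, h2⟩

/-- By Poincaré recurrence, almost every orbit meets some level set `{g > 1/(j+1)}` infinitely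
often, so the Birkhoff sums of a positive function diverge. -/
lemma ae_tendsto_birkhoff_atTop
    [MeasurableSpace X] {μ : Measure X}
    (hT : MeasurePreserving T μ μ) (hc : Conservative T μ)
    {g : X → ℝ} (hg : Measurable g) (hgpos : ∀ᵐ x ∂μ, 0 < g x) :
    ∀ᵐ x ∂μ, Tendsto (fun n => birkhoff T g n x) atTop atTop := by
  have hrec : ∀ j : ℕ, ∀ᵐ x ∂μ, x ∈ {y | 1 / ((j : ℝ) + 1) < g y} →
      ∃ᶠ n in atTop, T^[n] x ∈ {y | 1 / ((j : ℝ) + 1) < g y} := fun j =>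
    hc.ae_mem_imp_frequently_image_mem (measurableSet_lt measurable_const hg).nullMeasurableSet
  filter_upwards [ae_forall_iterate hT hgpos, ae_all_iff.2 hrec] with x hx hr
  obtain ⟨j, hj⟩ := exists_nat_one_div_lt (hx 0)
  refine (not_summable_iff_tendsto_nat_atTop_of_nonneg (f := fun k => g (T^[k] x))
    fun k => (hx k).le).1 fun hs => ?_
  have hev := hs.tendsto_atTop_zero.eventually
    (gt_mem_nhds (show (0 : ℝ) < 1 / ((j : ℝ) + 1) by positivity))
  obtain ⟨n, h1, h2⟩ := ((hr j hj).and_eventually hev).exists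
  exact lt_asymm h1 h2

/-! ### Superadditive sequences along one orbit -/

/-- Cutting `[k, k + n)` into `q` consecutive blocks of length `N` and a remainder. Here `b k n`
plays the role of `a_n (T^k x)`. -/
lemma sum_block_le {b : ℕ → ℕ → ℝ}
    (hb : ∀ k, ∀ n ≥ 1, ∀ m ≥ 1, b k n + b (k + n) m ≤ b k (n + m))
    (h0 : ∀ k, ∀ n ≥ 1, 0 ≤ b k n) {N : ℕ} (hN : 1 ≤ N) (q : ℕ) :
    ∀ k, ∀ n ≥ 1, q * N ≤ n → ∑ j ∈ Finset.range q, b (k + j * N) N ≤ b k n := by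
  induction q with
  | zero => intro k n hn _; simpa using h0 k n hn
  | succ q ih =>
    intro k n hn hq
    rw [Finset.sum_range_succ']
    rw [add_mul, one_mul] at hq
    rcases Nat.lt_or_ge N n with h | h
    · obtain ⟨m, rfl⟩ := Nat.exists_eq_add_of_lt h
      have h1 := ih (k + N) (m + 1) (by omega) (by omega)
      have h2 := hb k N hN (m + 1) (by omega)
      have h3 : ∀ j, k + (j + 1) * N = k + N + j * N := fun j => by ring
      simp only [h3, zero_mul, add_zero]
      rw [← add_assoc] at h2
      linarith
    · have hnN : n = N := by
        have := Nat.zero_le (q * N)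
        omega
      have : q = 0 := by
        have h1 : q * N = 0 := by omega
        rcases Nat.mul_eq_zero.1 h1 with h | h <;> omega
      subst this hnN
      simp

/-- Averaging the block decompositions over the `N` possible offsets `r < N` bounds a Birkhoff
sum of `a_N` by `N * a_n`. Here `b k n` plays the role of `a_n (T^k x)`. -/
lemma sum_range_le_mul {b : ℕ → ℕ → ℝ}
    (hb : ∀ k, ∀ n ≥ 1, ∀ m ≥ 1, b k n + b (k + n) m ≤ b k (n + m))
    (h0 : ∀ k, ∀ n ≥ 1, 0 ≤ b k n) {N : ℕ} (hN : 1 ≤ N) {q n : ℕ} (hn : (q + 1) * N ≤ n) :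
    ∑ i ∈ Finset.range (q * N), b i N ≤ N * b 0 n := by
  rw [add_mul, one_mul] at hn
  have hoff : ∀ r ∈ Finset.range N, ∑ j ∈ Finset.range q, b (r + j * N) N ≤ b 0 n := by
    intro r hr
    have hr := Finset.mem_range.1 hr
    rcases Nat.eq_zero_or_pos r with rfl | hr0
    · exact sum_block_le hb h0 hN q 0 n (by omega) (by omega)
    · have h1 := sum_block_le hb h0 hN q r (n - r) (by omega) (by omega)
      have h2 := hb 0 r hr0 (n - r) (by omega)
      rw [Nat.add_sub_cancel' (by omega), zero_add] at h2
      linarith [h0 0 r hr0]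
  have hsplit : ∀ p, ∑ i ∈ Finset.range (p * N), b i N
      = ∑ j ∈ Finset.range p, ∑ r ∈ Finset.range N, b (r + j * N) N := by
    intro p
    induction p with
    | zero => simp
    | succ p ih =>
      rw [add_mul, one_mul, Finset.sum_range_add, ih, Finset.sum_range_succ]
      simp only [add_comm (p * N)]
  rw [hsplit, Finset.sum_comm]
  simpa using Finset.sum_le_sum hoff

/-- If `f ≤ K` and `f ≤ a_N` along an orbit, then `S_n f ≤ N a_n + 2 N K`: an initial part of the
orbit of length a multiple of `N` is bounded by `N a_n`, and at most `2 N` terms are left over. -/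
lemma birkhoff_le_of_le {a : ℕ → X → ℝ} {f : X → ℝ} {x : X} {K : ℝ} (hK : 0 ≤ K)
    (hb : ∀ k, ∀ n ≥ 1, ∀ m ≥ 1, a n (T^[k] x) + a m (T^[k + n] x) ≤ a (n + m) (T^[k] x))
    (h0 : ∀ k, ∀ n ≥ 1, 0 ≤ a n (T^[k] x)) {N : ℕ} (hN : 1 ≤ N)
    (hfa : ∀ k, f (T^[k] x) ≤ a N (T^[k] x)) (hfK : ∀ k, f (T^[k] x) ≤ K) {n : ℕ} (hn : N ≤ n) :
    birkhoff T f n x ≤ N * a n x + 2 * N * K := by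
  obtain ⟨q, hq⟩ : ∃ q, n / N = q + 1 :=
    Nat.exists_eq_add_one.2 (Nat.div_pos hn hN)
  have hdm := Nat.div_add_mod n N
  have hmod := Nat.mod_lt n hN
  rw [hq] at hdm
  have h1 : (q + 1) * N ≤ n := by rw [mul_comm]; omega
  obtain ⟨s, hs⟩ : ∃ s, n = q * N + s := Nat.exists_eq_add_of_le (by nlinarith)
  have hs2 : s ≤ 2 * N := by nlinarith
  have hmain := sum_range_le_mul (b := fun k n => a n (T^[k] x)) hb h0 hN h1
  have hsum : birkhoff T f n x
      = ∑ i ∈ Finset.range (q * N), f (T^[i] x) + ∑ i ∈ Finset.range s, f (T^[q * N + i] x) := by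
    rw [birkhoff, ← Finset.sum_range_add, ← hs]
  have hA : ∑ i ∈ Finset.range (q * N), f (T^[i] x) ≤ N * a n x :=
    (Finset.sum_le_sum fun i _ => hfa i).trans hmain
  have hB : ∑ i ∈ Finset.range s, f (T^[q * N + i] x) ≤ s * K := by
    simpa using Finset.sum_le_card_nsmul (Finset.range s) _ K fun i _ => hfK (q * N + i)
  have hC : (s : ℝ) * K ≤ 2 * N * K := mul_le_mul_of_nonneg_right (by exact_mod_cast hs2) hK
  linarith

/-! ### The lower limit of the ratios -/

/-- The lower limit of `a_n / S_n g`, with values in `[0, ∞]` (negative ratios count as `0`). -/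
noncomputable def ratioLiminf (T : X → X) (a : ℕ → X → ℝ) (g : X → ℝ) (x : X) : ENNReal :=
  liminf (fun n => ENNReal.ofReal (a n x / birkhoff T g n x)) atTop

/-- `erealToENNReal` is definitionally `EReal.toENNReal`, which is monotone and continuous and so
commutes with lower limits. -/
lemma erealToENNReal_liminf (u : ℕ → ℝ) :
    erealToENNReal (liminf (fun n => ((u n : ℝ) : EReal)) atTop)
      = liminf (fun n => ENNReal.ofReal (u n)) atTop := by
  change EReal.toENNReal _ = _
  have hmono : Monotone EReal.toENNReal := fun x y h => EReal.toENNReal_le_toENNReal h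
  rw [hmono.map_liminf_of_continuousAt _ EReal.continuous_toENNReal.continuousAt]
  congr 1

lemma measurable_ratioLiminf [MeasurableSpace X] (hT : Measurable T)
    {a : ℕ → X → ℝ} (ha : ∀ n, Measurable (a n))
    {g : X → ℝ} (hg : Measurable g) : Measurable (ratioLiminf T a g) :=
  Measurable.liminf fun n => ((ha n).div (measurable_birkhoff hT hg n)).ennreal_ofReal

/-- As `S_n g → ∞`, the shift by one step in `a_{n+1} ≥ a_n ∘ T` and
`S_{n+1} g = g + S_n g ∘ T` does not affect the lower limit of the ratios. -/
lemma ratioLiminf_comp_le {a : ℕ → X → ℝ} {g : X → ℝ} {x : X}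
    (hs : Tendsto (fun n => birkhoff T g n (T x)) atTop atTop)
    (ha : ∀ n ≥ 1, a n (T x) ≤ a (n + 1) x) :
    ratioLiminf T a g (T x) ≤ ratioLiminf T a g x := by
  refine le_of_forall_lt fun c hc => ?_
  obtain ⟨r, hcr, hr⟩ := ENNReal.lt_iff_exists_nnreal_btwn.1 hc
  obtain ⟨r', hrr', hr'⟩ := ENNReal.lt_iff_exists_nnreal_btwn.1 hr
  refine hcr.trans_le ?_
  unfold ratioLiminf
  rw [← Filter.liminf_nat_add _ 1]
  refine le_liminf_of_le (by isBoundedDefault) ?_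
  have hlt : (r : ℝ) < r' := by exact_mod_cast hrr'
  filter_upwards [eventually_lt_of_lt_liminf hr', eventually_ge_atTop 1,
    hs.eventually_gt_atTop 0, hs.eventually_gt_atTop (-g x),
    hs.eventually_ge_atTop (r * g x / (r' - r))] with n h1 hn h2 h3 h4
  rw [ENNReal.lt_ofReal_iff_toReal_lt ENNReal.coe_ne_top, ENNReal.coe_toReal,
    lt_div_iff₀ h2] at h1
  rw [div_le_iff₀ (sub_pos.2 hlt)] at h4
  rw [ENNReal.le_ofReal_iff_toReal_le ENNReal.coe_ne_top, ENNReal.coe_toReal]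
  · rw [birkhoff_succ', le_div_iff₀ (by linarith)]
    nlinarith [ha n hn]
  · rw [birkhoff_succ']
    refine div_nonneg ?_ (by linarith)
    nlinarith [ha n hn, r'.coe_nonneg]

/-! ### The inequality for a single index -/

/-- The inequality for one index `N`, integrated over the whole space. -/
lemma lintegral_le_mul_lintegral_ratioLiminf
    [MeasurableSpace X] {μ : Measure X}
    (hT : MeasurePreserving T μ μ)
    (hc : Conservative T μ) {a : ℕ → X → ℝ} (hmeas : ∀ n, Measurable (a n))
    (hsuper : ∀ n ≥ 1, ∀ m ≥ 1, ∀ᵐ x ∂μ, a n x + a m (T^[n] x) ≤ a (n + m) x)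
    (ha1 : ∀ᵐ x ∂μ, 0 ≤ a 1 x) {g : X → ℝ} (hgm : Measurable g) (hg : Integrable g μ)
    (hgpos : ∀ᵐ x ∂μ, 0 < g x) {N : ℕ} (hN : 1 ≤ N) :
    ∫⁻ x, ENNReal.ofReal (a N x) ∂μ
      ≤ N * ∫⁻ x, ratioLiminf T a g x * ENNReal.ofReal (g x) ∂μ := by
  set L := ratioLiminf T a g with hL
  have hLm : Measurable L := measurable_ratioLiminf hT.measurable hmeas hgm
  have hLgm : Measurable fun x => L x * ENNReal.ofReal (g x) := hLm.mul hgm.ennreal_ofReal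
  by_cases htop : ∫⁻ x, L x * ENNReal.ofReal (g x) ∂μ = ⊤
  · rw [htop, ENNReal.mul_top (by exact_mod_cast (by omega : N ≠ 0))]
    exact le_top
  have hsup' : ∀ᵐ x ∂μ, ∀ n, ∀ m, 1 ≤ n → 1 ≤ m → a n x + a m (T^[n] x) ≤ a (n + m) x := by
    refine ae_all_iff.2 fun n => ae_all_iff.2 fun m => ?_
    by_cases hn : 1 ≤ n
    · by_cases hm : 1 ≤ m
      · filter_upwards [hsuper n hn m hm] with x hx _ _ using hx
      · exact Eventually.of_forall fun x _ h => absurd h hm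
    · exact Eventually.of_forall fun x h => absurd h hn
  have horbS : ∀ᵐ x ∂μ, ∀ k, ∀ n ≥ 1, ∀ m ≥ 1,
      a n (T^[k] x) + a m (T^[k + n] x) ≤ a (n + m) (T^[k] x) := by
    filter_upwards [ae_forall_iterate hT hsup'] with x hx k n hn m hm
    rw [add_comm k n, Function.iterate_add_apply]
    exact hx k n m hn hm
  have horb0 : ∀ᵐ x ∂μ, ∀ k, ∀ n ≥ 1, 0 ≤ a n (T^[k] x) := by
    filter_upwards [horbS, ae_forall_iterate hT ha1] with x hx h1 k n hn
    induction n, hn using Nat.le_induction with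
    | base => exact h1 k
    | succ n hn ih => linarith [hx k n hn 1 le_rfl, h1 (k + n)]
  have hdiv := ae_tendsto_birkhoff_atTop hT hc hgm hgpos
  have hLT : ∀ᵐ x ∂μ, L (T x) = L x := by
    refine ae_comp_eq_of_ae_comp_le hT hc hLm ?_
    filter_upwards [ae_forall_iterate hT hdiv, horbS, ha1] with x hx hS h1
    refine ratioLiminf_comp_le (hx 1) fun n hn => ?_
    have := hS 0 1 le_rfl n hn
    rw [add_comm 1 n] at this
    simp only [zero_add, Function.iterate_zero, Function.iterate_one, id] at this
    linarith
  have hLorb : ∀ᵐ x ∂μ, ∀ k, L (T^[k] x) = L x := by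
    filter_upwards [ae_forall_iterate hT hLT] with x hx k
    induction k with
    | zero => rfl
    | succ k ih => rw [Function.iterate_succ_apply', hx k, ih]
  have hLfin : ∀ᵐ x ∂μ, L x ≠ ⊤ := by
    filter_upwards [ae_lt_top hLgm htop, hgpos] with x hx hgx h
    rw [h, ENNReal.top_mul (by simpa using hgx)] at hx
    exact lt_irrefl _ hx
  have hofReal : ∀ᵐ x ∂μ, ENNReal.ofReal ((L x).toReal * g x) = L x * ENNReal.ofReal (g x) := by
    filter_upwards [hLfin] with x hx
    rw [ENNReal.ofReal_mul ENNReal.toReal_nonneg, ENNReal.ofReal_toReal hx]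
  have hlgnn : 0 ≤ᵐ[μ] fun x => (L x).toReal * g x := by
    filter_upwards [hgpos] with x hx using mul_nonneg ENNReal.toReal_nonneg hx.le
  have hlgm : Measurable fun x => (L x).toReal * g x := hLm.ennreal_toReal.mul hgm
  have hlgi : Integrable (fun x => (L x).toReal * g x) μ := by
    refine ⟨hlgm.aestronglyMeasurable, ?_⟩
    rw [hasFiniteIntegral_iff_ofReal hlgnn, lintegral_congr_ae hofReal]
    exact lt_top_iff_ne_top.2 htop
  set f : ℕ → X → ℝ := fun K x => min (a N x) (min (K : ℝ) (K * g x)) with hf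
  have hfm : ∀ K, Measurable (f K) := fun K =>
    (hmeas N).min (measurable_const.min (hgm.const_mul _))
  have hfnn : ∀ K, 0 ≤ᵐ[μ] f K := fun K => by
    filter_upwards [horb0, hgpos] with x hx hgx
    exact le_min (hx 0 N hN) (le_min (Nat.cast_nonneg _) (mul_nonneg (Nat.cast_nonneg _) hgx.le))
  have hfi : ∀ K, Integrable (f K) μ := fun K => by
    refine (hg.const_mul (K : ℝ)).mono' (hfm K).aestronglyMeasurable ?_
    filter_upwards [hfnn K] with x hx
    rw [Real.norm_of_nonneg hx]
    exact (min_le_right _ _).trans (min_le_right _ _)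
  -- The maximal ergodic theorem for `h = N (L + ε) g - f K`; since `f K` is bounded by `K` and
  -- `S_n g → ∞`, the error `2 N K` is absorbed by half of `ε`.
  have hkey : ∀ K : ℕ, ∀ ε : ℝ, 0 < ε →
      ∫ x, f K x ∂μ ≤ N * ∫ x, (L x).toReal * g x ∂μ + ε * (N * ∫ x, g x ∂μ) := by
    intro K ε hε
    have i1 : Integrable (fun x => N * ((L x).toReal * g x)) μ := hlgi.const_mul _
    have i2 : Integrable (fun x => ε * (N * g x)) μ := (hg.const_mul _).const_mul _
    have i3 : Integrable (fun x => N * ((L x).toReal * g x) + ε * (N * g x)) μ := i1.add i2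
    have h0 := integral_nonneg_of_birkhoff_pos hT
      (h := fun x => (N * ((L x).toReal * g x) + ε * (N * g x)) - f K x)
      (((hlgm.const_mul _).add ((hgm.const_mul _).const_mul _)).sub (hfm K))
      (i3.sub (hfi K)) ?_
    · rw [integral_sub i3 (hfi K), integral_add i1 i2, integral_const_mul,
        integral_const_mul, integral_const_mul] at h0
      linarith
    · filter_upwards [horbS, horb0, hLorb, hLfin, hdiv] with x hS hnn hLx hLt hd
      have hlt : L x < ENNReal.ofReal ((L x).toReal + ε / 2) := by
        rw [ENNReal.lt_ofReal_iff_toReal_lt hLt]; linarith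
      obtain ⟨n, ⟨⟨hfreq, hn⟩, hp⟩, hbig⟩ := ((((frequently_lt_of_liminf_lt
        (by isBoundedDefault) hlt).and_eventually (eventually_ge_atTop N)).and_eventually
        (hd.eventually_gt_atTop 0)).and_eventually
        (hd.eventually_gt_atTop (2 * K / (ε / 2)))).exists
      refine ⟨n, ?_⟩
      have hN0 : (0 : ℝ) < N := by exact_mod_cast hN
      have hub := birkhoff_le_of_le (f := f K) (Nat.cast_nonneg K) hS hnn hN
        (fun k => min_le_left _ _)
        (fun k => (min_le_right _ _).trans (min_le_left _ _)) hn
      have hratio : a n x < ((L x).toReal + ε / 2) * birkhoff T g n x := by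
        rw [← div_lt_iff₀ hp]
        exact ((ENNReal.ofReal_lt_ofReal_iff (by positivity)).1 hfreq)
      rw [div_lt_iff₀ (by positivity)] at hbig
      have hsum : birkhoff T (fun x => (N * ((L x).toReal * g x) + ε * (N * g x)) - f K x) n x
          = N * (((L x).toReal + ε) * birkhoff T g n x) - birkhoff T (f K) n x := by
        simp only [birkhoff, hLx, Finset.sum_sub_distrib, Finset.sum_add_distrib, Finset.mul_sum]
        rw [← Finset.sum_add_distrib]
        congr 1
        exact Finset.sum_congr rfl fun i _ => by ring
      rw [hsum]
      nlinarith
  have hle : ∀ K : ℕ, ∫⁻ x, ENNReal.ofReal (f K x) ∂μ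
      ≤ N * ∫⁻ x, L x * ENNReal.ofReal (g x) ∂μ := by
    intro K
    have hK : ∫ x, f K x ∂μ ≤ N * ∫ x, (L x).toReal * g x ∂μ := by
      have hlim : Tendsto (fun ε : ℝ => N * ∫ x, (L x).toReal * g x ∂μ + ε * (N * ∫ x, g x ∂μ))
          (𝓝[>] 0) (𝓝 (N * ∫ x, (L x).toReal * g x ∂μ + 0 * (N * ∫ x, g x ∂μ))) :=
        (Continuous.tendsto (by fun_prop) 0).mono_left nhdsWithin_le_nhds
      rw [zero_mul, add_zero] at hlim
      exact ge_of_tendsto hlim (eventually_mem_nhdsWithin.mono fun ε hε => hkey K ε hε)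
    rw [← ofReal_integral_eq_lintegral_ofReal (hfi K) (hfnn K), ← lintegral_congr_ae hofReal,
      ← ofReal_integral_eq_lintegral_ofReal hlgi hlgnn, ← ENNReal.ofReal_natCast N,
      ← ENNReal.ofReal_mul (Nat.cast_nonneg _)]
    exact ENNReal.ofReal_le_ofReal hK
  refine le_of_tendsto' (lintegral_tendsto_of_tendsto_of_monotone
    (f := fun K x => ENNReal.ofReal (f K x)) (fun K => (hfm K).ennreal_ofReal.aemeasurable)
    ?_ ?_) hle
  · filter_upwards [hgpos] with x hx K K' hKK
    have hKK : (K : ℝ) ≤ K' := by exact_mod_cast hKK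
    exact ENNReal.ofReal_le_ofReal (min_le_min le_rfl
      (min_le_min hKK (mul_le_mul_of_nonneg_right hKK hx.le)))
  · filter_upwards [hgpos] with x hx
    refine tendsto_const_nhds.congr' ?_
    filter_upwards [tendsto_natCast_atTop_atTop.eventually_ge_atTop (a N x),
      tendsto_natCast_atTop_atTop.eventually_ge_atTop (a N x / g x)] with K h1 h2
    rw [div_le_iff₀ hx] at h2
    simp only [hf]
    rw [min_eq_left (le_min h1 h2)]

end Aux

/-- For a superadditive sequence `(aₙ)` with `a₁ ≥ 0` and `g ∈ L¹` positive,
`sup_{n≥1} (1/n)∫_A aₙ ≤ ∫_A (liminf aₙ/Sₙg)·g` for every invariant set `A`. -/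
theorem sup_le_integral_liminf {X : Type*} [MeasurableSpace X] (μ : Measure X)
    [SigmaFinite μ] (T : X → X) (hT : MeasurePreserving T μ μ) (hcons : IsConservative T μ)
    (a : ℕ → X → ℝ) (hmeas : ∀ n, Measurable (a n))
    (hsuper : ∀ n ≥ 1, ∀ m ≥ 1, ∀ᵐ x ∂μ, a n x + a m (T^[n] x) ≤ a (n + m) x)
    (ha1 : ∀ᵐ x ∂μ, 0 ≤ a 1 x)
    (g : X → ℝ) (hg : Integrable g μ) (hgpos : ∀ᵐ x ∂μ, 0 < g x) :
    ∀ A : Set X, MeasurableSet A → T ⁻¹' A = A →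
      (⨆ n : ℕ, (∫⁻ x in A, ENNReal.ofReal (a (n + 1) x) ∂μ) / (((n : ℕ) + 1 : ℕ) : ENNReal))
        ≤ ∫⁻ x in A,
            erealToENNReal
              (liminf (fun n => ((a n x / birkhoff T g n x : ℝ) : EReal)) atTop)
            * ENNReal.ofReal (g x) ∂μ := by
  intro A hA hTA
  -- `g` is only almost everywhere measurable; a measurable version has a.e. the same Birkhoff sums.
  set g' := hg.1.mk g with hg'
  have hg'm : Measurable g' := hg.1.stronglyMeasurable_mk.measurable
  have hgg' : g =ᵐ[μ] g' := hg.1.ae_eq_mk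
  have hTr : MeasurePreserving T (μ.restrict A) (μ.restrict A) := by
    have h := hT.restrict_preimage hA
    rwa [hTA] at h
  have hcr : Conservative T (μ.restrict A) :=
    (hcons.conservative hT).measureRestrict fun x hx => by rwa [← hTA] at hx
  have hrhs : ∫⁻ x in A, erealToENNReal
        (liminf (fun n => ((a n x / birkhoff T g n x : ℝ) : EReal)) atTop)
        * ENNReal.ofReal (g x) ∂μ
      = ∫⁻ x in A, ratioLiminf T a g' x * ENNReal.ofReal (g' x) ∂μ := by
    refine lintegral_congr_ae (ae_restrict_of_ae ?_)
    filter_upwards [ae_forall_iterate hT hgg'] with x hx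
    have hb : ∀ n, birkhoff T g n x = birkhoff T g' n x := fun n =>
      Finset.sum_congr rfl fun k _ => hx k
    have h0 : g x = g' x := hx 0
    rw [erealToENNReal_liminf, ratioLiminf, h0]
    simp only [hb]
  rw [hrhs]
  refine iSup_le fun n => ENNReal.div_le_of_le_mul' ?_
  refine lintegral_le_mul_lintegral_ratioLiminf hTr hcr hmeas
    (fun n hn m hm => ae_restrict_of_ae (hsuper n hn m hm)) (ae_restrict_of_ae ha1) hg'm
    (hg.congr hgg').restrict (ae_restrict_of_ae ?_) (Nat.le_add_left 1 n)
  filter_upwards [hgg', hgpos] with x h1 h2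
  rwa [← h1]
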